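/- arXiv:1503.02939 — 4 statements merged into one kernel-verified Lean document; each statement's English description precedes it below -/
import Mathlib

section
/- Let α ∈ R be a unit and let i, j be natural numbers. Let A be an α^i-circulant k×k matrix over R and let M be the diagonal k×k matrix with diagonal vector (1, α^j, α^{2j}, …, α^{(k−1)j}). Then M is invertible and M^{-1}·A·M is a β-circulant matrix, where β = α^i·(α^{-1})^{kj} (i.e., β = α^{i−kj}). Moreover, if α² = 1, then M is orthogonal, i.e., M·M^t = I_k. -/
/-- The `α`-circulant matrix generated by the vector `v`. -/
def cir {R : Type*} [CommRing R] {k : ℕ} (α : R) (v : Fin k → R) :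
    Matrix (Fin k) (Fin k) R :=
  Matrix.of fun i j =>
    if h : (i : ℕ) ≤ (j : ℕ) then v ⟨(j : ℕ) - (i : ℕ), by have := j.isLt; omega⟩
    else α * v ⟨k + (j : ℕ) - (i : ℕ), by have := i.isLt; have := j.isLt; omega⟩

/-- The matrix `T_α`, with ones on the superdiagonal, `α` in the lower left corner,
and zeros elsewhere. -/
def Tmat {R : Type*} [CommRing R] (k : ℕ) (α : R) : Matrix (Fin k) (Fin k) R :=
  Matrix.of fun i j =>
    if (i : ℕ) + 1 = (j : ℕ) then 1
    else if (i : ℕ) = k - 1 ∧ (j : ℕ) = 0 then α else 0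

/-- For a unit `α`, conjugation by the diagonal matrix with diagonal
`(1, α^j, α^{2j}, …, α^{(k-1)j})` turns an `α^i`-circulant matrix into an
`α^{i-kj}`-circulant matrix; if `α² = 1` the conjugating matrix is orthogonal. -/
theorem stmt10 {R : Type*} [CommRing R] {k : ℕ} (hk : 1 ≤ k) (α : R) (hα : IsUnit α)
    (i j : ℕ) (v : Fin k → R) (A : Matrix (Fin k) (Fin k) R) (hA : A = cir (α ^ i) v)
    (M : Matrix (Fin k) (Fin k) R)
    (hM : M = Matrix.diagonal fun l : Fin k => α ^ ((l : ℕ) * j)) :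
    IsUnit M ∧
    (∃ u : Fin k → R, M⁻¹ * A * M = cir (α ^ i * Ring.inverse α ^ (k * j)) u) ∧
    (α ^ 2 = 1 → M * M.transpose = 1) := by
  have hinv : Ring.inverse α ^ (k * j) * α ^ (k * j) = 1 := by
    rw [← mul_pow, Ring.inverse_mul_cancel _ hα, one_pow]
  have hU : IsUnit M := by
    rw [hM, Matrix.isUnit_diagonal, Pi.isUnit_iff]
    intro l
    exact hα.pow _
  refine ⟨hU, ⟨fun l => α ^ ((l : ℕ) * j) * v l, ?_⟩, ?_⟩
  · have hdet : IsUnit M.det := (Matrix.isUnit_iff_isUnit_det M).1 hU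
    have key : A * M = M * cir (α ^ i * Ring.inverse α ^ (k * j))
        (fun l => α ^ ((l : ℕ) * j) * v l) := by
      subst hA hM
      ext a b
      rw [Matrix.mul_diagonal, Matrix.diagonal_mul]
      simp only [cir, Matrix.of_apply]
      split_ifs with h
      · have e : (b : ℕ) * j = (a : ℕ) * j + ((b : ℕ) - (a : ℕ)) * j := by
          rw [← add_mul]; congr 1; omega
        rw [e, pow_add]; ring
      · have e : α ^ ((a : ℕ) * j) * α ^ ((k + (b : ℕ) - (a : ℕ)) * j)
            = α ^ (k * j) * α ^ ((b : ℕ) * j) := by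
          rw [← pow_add, ← pow_add, ← add_mul, ← add_mul]
          congr 2
          have := a.isLt
          omega
        generalize v _ = x
        linear_combination (-α ^ i * α ^ ((b : ℕ) * j) * x) * hinv
          - α ^ i * Ring.inverse α ^ (k * j) * x * e
    rw [Matrix.mul_assoc, key, Matrix.nonsing_inv_mul_cancel_left _ _ hdet]
  · intro h
    rw [hM, Matrix.diagonal_transpose, Matrix.diagonal_mul_diagonal, ← Matrix.diagonal_one]
    congr 1
    funext l
    rw [← pow_add, ← two_mul, pow_mul, h, one_pow]
end

section
/- Let I be an ideal of R, let α ∈ R, and let N, M be invertible k×k matrices over R such that N^{-1}·C·M is α-circulant for every α-circulant k×k matrix C over R. Let a, b ∈ R^k be vectors such that every entry of the matrix N^{-1}·cir_α(a)·M − cir_α(b) lies in I. Then for every vector w ∈ I^k (all components in I) there exists a vector u ∈ I^k such that N^{-1}·cir_α(a + w)·M = cir_α(b + u). (That is, every lift of cir_α(a) modulo I is carried by the transformation (N,M) to a lift of cir_α(b) modulo I.) -/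
/-- Suppose conjugation `C ↦ N⁻¹CM` by the invertible matrices `N, M` preserves
`α`-circulancy, and suppose `N⁻¹ · cir_α(a) · M ≡ cir_α(b)` modulo the ideal `I`.
Then every lift `cir_α(a + w)` of `cir_α(a)` (with `w ∈ I^k`) is carried to a lift
`cir_α(b + u)` of `cir_α(b)` with `u ∈ I^k`. -/
theorem stmt11 {R : Type*} [CommRing R] {k : ℕ} (hk : 1 ≤ k) (I : Ideal R) (α : R)
    (N M : Matrix (Fin k) (Fin k) R) (hN : IsUnit N) (hM : IsUnit M)
    (hcirc : ∀ v : Fin k → R, ∃ u : Fin k → R, N⁻¹ * cir α v * M = cir α u)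
    (a b : Fin k → R)
    (hab : ∀ p q : Fin k, (N⁻¹ * cir α a * M - cir α b) p q ∈ I)
    (w : Fin k → R) (hw : ∀ p, w p ∈ I) :
    ∃ u : Fin k → R, (∀ p, u p ∈ I) ∧ N⁻¹ * cir α (a + w) * M = cir α (b + u) := by
  obtain ⟨c, hc⟩ := hcirc (a + w)
  have hadd : cir α (a + w) = cir α a + cir α w := by
    ext i j
    simp only [cir, Matrix.of_apply, Matrix.add_apply, Pi.add_apply]
    split_ifs
    · rfl
    · ring
  have hwI : ∀ i j, cir α w i j ∈ I := by
    intro i j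
    simp only [cir, Matrix.of_apply]
    split_ifs
    · exact hw _
    · exact I.mul_mem_left _ (hw _)
  have hrow : ∀ (v : Fin k → R) (p : Fin k), cir α v ⟨0, hk⟩ p = v p := by
    intro v p
    simp only [cir, Matrix.of_apply]
    rw [dif_pos (Nat.zero_le _)]
    rfl
  have hprod : ∀ i j, (N⁻¹ * cir α w * M) i j ∈ I := by
    intro i j
    rw [Matrix.mul_apply]
    refine Ideal.sum_mem _ fun x _ => I.mul_mem_right _ ?_
    rw [Matrix.mul_apply]
    exact Ideal.sum_mem _ fun y _ => I.mul_mem_left _ (hwI _ _)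
  refine ⟨c - b, fun p => ?_, ?_⟩
  · have h1 := I.add_mem (hab ⟨0, hk⟩ p) (hprod ⟨0, hk⟩ p)
    have h2 : (N⁻¹ * cir α a * M) ⟨0, hk⟩ p + (N⁻¹ * cir α w * M) ⟨0, hk⟩ p = c p := by
      rw [← hrow c p, ← hc, hadd, Matrix.mul_add, Matrix.add_mul, Matrix.add_apply]
    rw [Matrix.sub_apply, hrow b p] at h1
    rw [Pi.sub_apply, ← h2]
    convert h1 using 1
    ring
  · rw [hc, add_sub_cancel]
end

section
/- Let α ∈ R with α² = 1, let a = (a_0,…,a_{k−1}) ∈ R^k and A = cir_α(a). Then A·A^t = −I_k (equivalently, the code generated by (I_k | A) is self-orthogonal with respect to the standard bilinear form) if and only if 1 + Σ_{i=0}^{k−1} a_i² = 0 and, for every j with 1 ≤ j ≤ ⌊k/2⌋, Σ_{i=0}^{j−1} α·a_i·a_{k−j+i} + Σ_{i=j}^{k−1} a_i·a_{i−j} = 0. -/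
/-- the quasi-periodic extension of `a` to the integers -/
noncomputable def cext {R : Type*} [CommRing R] {k : ℕ} (hk : 0 < k) (α : R) (a : Fin k → R)
    (n : ℤ) : R :=
  (if Even (n / (k : ℤ)) then 1 else α) * a ⟨(n % (k : ℤ)).toNat, by
    have h1 := Int.emod_nonneg n (b := (k : ℤ)) (by omega)
    have h2 := Int.emod_lt_of_pos n (b := (k : ℤ)) (by omega)
    omega⟩

lemma cext_add {R : Type*} [CommRing R] {k : ℕ} (hk : 0 < k) (α : R) (hα : α ^ 2 = 1)
    (a : Fin k → R) (n : ℤ) : cext hk α a (n + k) = α * cext hk α a n := by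
  unfold cext
  have h1 : (n + (k : ℤ)) / (k : ℤ) = n / k + 1 := by
    rw [Int.add_ediv_of_dvd_right (dvd_refl _), Int.ediv_self (by omega)]
  simp only [h1, Int.add_emod_right, Int.even_add_one]
  by_cases h : Even (n / (k : ℤ))
  · simp [h]
  · simp only [h, not_false_eq_true, if_true, if_false]
    rw [← mul_assoc, ← pow_two, hα]

lemma cext_nat {R : Type*} [CommRing R] {k : ℕ} (hk : 0 < k) (α : R)
    (a : Fin k → R) (n : ℕ) (hn : n < k) : cext hk α a n = a ⟨n, hn⟩ := by
  unfold cext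
  have h1 : (n : ℤ) / (k : ℤ) = 0 := Int.ediv_eq_zero_of_lt (by omega) (by omega)
  have h2 : (n : ℤ) % (k : ℤ) = n := Int.emod_eq_of_lt (by omega) (by omega)
  simp [h1, h2]

lemma cext_neg {R : Type*} [CommRing R] {k : ℕ} (hk : 0 < k) (α : R) (hα : α ^ 2 = 1)
    (a : Fin k → R) (n : ℤ) : cext hk α a n = α * cext hk α a (n + k) := by
  rw [cext_add hk α hα, ← mul_assoc, ← pow_two, hα, one_mul]

lemma sum_shift {R : Type*} [CommRing R] {k : ℕ} (f : ℤ → R) (hf : ∀ n, f (n + k) = f n)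
    (d : ℤ) : ∑ m ∈ Finset.range k, f (m + d) = ∑ m ∈ Finset.range k, f m := by
  have step : ∀ d : ℤ, ∑ m ∈ Finset.range k, f (m + (d + 1)) = ∑ m ∈ Finset.range k, f (m + d) := by
    intro d
    have h1 := Finset.sum_range_succ (fun m : ℕ => f (m + d)) k
    rw [Finset.sum_range_succ'] at h1
    have h2 : f ((k : ℤ) + d) = f (((0 : ℕ) : ℤ) + d) := by
      rw [add_comm, hf]; simp
    rw [h2] at h1
    have h3 := add_right_cancel h1
    rw [← h3]
    refine Finset.sum_congr rfl fun m _ => ?_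
    congr 1; push_cast; ring
  induction d using Int.induction_on with
  | zero => simp
  | succ n ih => rw [step, ih]
  | pred n ih => rw [← ih, ← step]; simp

/-- the autocorrelation sum -/
noncomputable def Scor {R : Type*} [CommRing R] {k : ℕ} (hk : 0 < k) (α : R) (a : Fin k → R)
    (d : ℤ) : R := ∑ m ∈ Finset.range k, cext hk α a m * cext hk α a (m - d)

lemma cir_eq {R : Type*} [CommRing R] {k : ℕ} (hk : 0 < k) (α : R) (hα : α ^ 2 = 1)
    (a : Fin k → R) (i j : Fin k) : cir α a i j = cext hk α a ((j : ℤ) - (i : ℤ)) := by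
  have hi := i.isLt
  have hj := j.isLt
  unfold cir
  simp only [Matrix.of_apply]
  split_ifs with h
  · rw [← cext_nat hk α a]
    congr 1; omega
  · rw [← cext_nat hk α a, cext_neg hk α hα a ((j : ℤ) - (i : ℤ))]
    congr 2; omega

lemma per {R : Type*} [CommRing R] {k : ℕ} (hk : 0 < k) (α : R) (hα : α ^ 2 = 1)
    (a : Fin k → R) (u v n : ℤ) :
    cext hk α a (n + k + u) * cext hk α a (n + k + v)
      = cext hk α a (n + u) * cext hk α a (n + v) := by
  rw [add_right_comm, cext_add hk α hα, add_right_comm, cext_add hk α hα]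
  linear_combination (cext hk α a (n + u) * cext hk α a (n + v)) * hα

lemma mul_eq {R : Type*} [CommRing R] {k : ℕ} (hk : 0 < k) (α : R) (hα : α ^ 2 = 1)
    (a : Fin k → R) (i l : Fin k) :
    (cir α a * (cir α a).transpose) i l = Scor hk α a ((l : ℤ) - (i : ℤ)) := by
  rw [Matrix.mul_apply]
  simp only [Matrix.transpose_apply, cir_eq hk α hα]
  rw [Fin.sum_univ_eq_sum_range
    (fun m : ℕ => cext hk α a ((m : ℤ) - (i : ℤ)) * cext hk α a ((m : ℤ) - (l : ℤ)))]
  have := sum_shift (k := k)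
    (fun n => cext hk α a (n + (-(i : ℤ))) * cext hk α a (n + (-(l : ℤ))))
    (fun n => per hk α hα a _ _ n) (i : ℤ)
  simp only [← sub_eq_add_neg] at this
  rw [← this]
  unfold Scor
  refine Finset.sum_congr rfl fun m _ => ?_
  congr 2 <;> ring

lemma Scor_neg {R : Type*} [CommRing R] {k : ℕ} (hk : 0 < k) (α : R) (hα : α ^ 2 = 1)
    (a : Fin k → R) (d : ℤ) : Scor hk α a (-d) = Scor hk α a d := by
  have := sum_shift (k := k)
    (fun n => cext hk α a (n + 0) * cext hk α a (n + (-d)))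
    (fun n => per hk α hα a _ _ n) d
  unfold Scor
  simp only [add_zero, ← sub_eq_add_neg] at this
  rw [← this]
  refine Finset.sum_congr rfl fun m _ => ?_
  rw [mul_comm]
  congr 2 <;> ring

lemma Scor_sub {R : Type*} [CommRing R] {k : ℕ} (hk : 0 < k) (α : R) (hα : α ^ 2 = 1)
    (a : Fin k → R) (d : ℤ) : Scor hk α a d = α * Scor hk α a (k - d) := by
  rw [← Scor_neg hk α hα a (k - d)]
  unfold Scor
  rw [Finset.mul_sum]
  refine Finset.sum_congr rfl fun m _ => ?_
  rw [cext_neg hk α hα a (m - d), show (m : ℤ) - -(k - d) = m - d + k by ring]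
  ring

lemma Scor_zero {R : Type*} [CommRing R] {k : ℕ} (hk : 0 < k) (α : R)
    (a : Fin k → R) : Scor hk α a 0 = ∑ i : Fin k, a i ^ 2 := by
  unfold Scor
  rw [← Fin.sum_univ_eq_sum_range
    (fun m : ℕ => cext hk α a (m : ℤ) * cext hk α a ((m : ℤ) - 0))]
  refine Finset.sum_congr rfl fun m _ => ?_
  rw [sub_zero, cext_nat hk α a m m.isLt, pow_two]

lemma Scor_nat {R : Type*} [CommRing R] {k : ℕ} (hk : 0 < k) (α : R) (hα : α ^ 2 = 1)
    (a : Fin k → R) (j : ℕ) (hj : j ≤ k) (hj1 : 1 ≤ j) : Scor hk α a j =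
    (∑ i ∈ Finset.range j,
        α * a ⟨i % k, Nat.mod_lt _ hk⟩ * a ⟨(k - j + i) % k, Nat.mod_lt _ hk⟩) +
      (∑ i ∈ Finset.Ico j k,
        a ⟨i % k, Nat.mod_lt _ hk⟩ * a ⟨(i - j) % k, Nat.mod_lt _ hk⟩) := by
  unfold Scor
  rw [← Finset.sum_range_add_sum_Ico _ hj]
  congr 1
  · refine Finset.sum_congr rfl fun i hi => ?_
    have hi := Finset.mem_range.1 hi
    rw [cext_neg hk α hα a (i - j), ← cext_nat hk α a, ← cext_nat hk α a,
      Nat.mod_eq_of_lt (by omega : i < k), Nat.mod_eq_of_lt (by omega : k - j + i < k),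
      show (i : ℤ) - j + k = ((k - j + i : ℕ) : ℤ) by omega]
    ring
  · refine Finset.sum_congr rfl fun i hi => ?_
    have hi := Finset.mem_Ico.1 hi
    rw [← cext_nat hk α a, ← cext_nat hk α a,
      Nat.mod_eq_of_lt (by omega : i < k), Nat.mod_eq_of_lt (by omega : i - j < k),
      show (i : ℤ) - j = ((i - j : ℕ) : ℤ) by omega]

/-- For `α² = 1` and `A = cir_α(a)`, we have `A·Aᵀ = -I_k` if and only if
`1 + ∑ aᵢ² = 0` and, for all `1 ≤ j ≤ ⌊k/2⌋`,
`∑_{i<j} α·aᵢ·a_{k-j+i} + ∑_{j≤i<k} aᵢ·a_{i-j} = 0`.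
(All indices of `a` occurring below are `< k`, so reducing them mod `k` is
the identity.) -/
theorem stmt13 {R : Type*} [CommRing R] {k : ℕ} (hk : 0 < k) (α : R) (hα : α ^ 2 = 1)
    (a : Fin k → R) :
    cir α a * (cir α a).transpose = -1 ↔
      (1 + ∑ i : Fin k, a i ^ 2 = 0 ∧
        ∀ j : ℕ, 1 ≤ j → j ≤ k / 2 →
          (∑ i ∈ Finset.range j,
              α * a ⟨i % k, Nat.mod_lt _ hk⟩ * a ⟨(k - j + i) % k, Nat.mod_lt _ hk⟩) +
            (∑ i ∈ Finset.Ico j k,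
              a ⟨i % k, Nat.mod_lt _ hk⟩ * a ⟨(i - j) % k, Nat.mod_lt _ hk⟩) = 0) := by
  constructor
  · intro h
    have key : ∀ i l : Fin k, Scor hk α a ((l : ℤ) - (i : ℤ)) = (-1 : Matrix (Fin k) (Fin k) R) i l := by
      intro i l
      rw [← mul_eq hk α hα, h]
    refine ⟨?_, fun j h1 h2 => ?_⟩
    · have := key ⟨0, hk⟩ ⟨0, hk⟩
      rw [sub_self, Scor_zero] at this
      rw [this]; simp
    · rw [← Scor_nat hk α hα a j (by omega) h1]
      have := key ⟨0, hk⟩ ⟨j, by omega⟩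
      simp only [Nat.cast_zero, sub_zero] at this
      rw [this, Matrix.neg_apply, Matrix.one_apply_ne, neg_zero]
      intro h
      have := congrArg Fin.val h
      simp only at this
      omega
  · rintro ⟨h0, hj⟩
    have half : ∀ j : ℕ, 1 ≤ j → j ≤ k / 2 → Scor hk α a j = 0 := by
      intro j h1 h2
      rw [Scor_nat hk α hα a j (by omega) h1]
      exact hj j h1 h2
    have all : ∀ j : ℕ, 1 ≤ j → j < k → Scor hk α a j = 0 := by
      intro j h1 h2
      by_cases h : j ≤ k / 2
      · exact half j h1 h
      · rw [Scor_sub hk α hα, show (k : ℤ) - j = ((k - j : ℕ) : ℤ) by omega,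
          half (k - j) (by omega) (by omega), mul_zero]
    ext i l
    rw [mul_eq hk α hα, Matrix.neg_apply]
    have hi := i.isLt
    have hl := l.isLt
    rcases lt_trichotomy (i : ℕ) (l : ℕ) with h | h | h
    · rw [Matrix.one_apply_ne (by intro e; rw [e] at h; omega), neg_zero,
        show (l : ℤ) - (i : ℤ) = ((l - i : ℕ) : ℤ) by omega]
      exact all _ (by omega) (by omega)
    · have e : i = l := Fin.ext h
      rw [e, Matrix.one_apply_eq, sub_self, Scor_zero]
      linear_combination h0
    · rw [Matrix.one_apply_ne (by intro e; rw [e] at h; omega), neg_zero,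
        ← Scor_neg hk α hα, show -((l : ℤ) - (i : ℤ)) = ((i - l : ℕ) : ℤ) by omega]
      exact all _ (by omega) (by omega)
end

section
/- Let C be a ℤ/4ℤ-submodule of (ℤ/4ℤ)^n that is self-orthogonal, i.e., ⟨c, c'⟩ = 0 for all c, c' ∈ C, and let φ: ℤ/4ℤ → ℤ/2ℤ denote the reduction homomorphism applied coordinatewise. Then the image φ(C) ⊆ (ℤ/2ℤ)^n is a self-orthogonal ℤ/2ℤ-linear code, and every element of φ(C) has Hamming weight divisible by 4; that is, φ(C) is a doubly-even self-orthogonal binary code. -/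
/-- The coordinatewise mod-2 reduction of a self-orthogonal `ℤ/4ℤ`-linear code is a
doubly-even self-orthogonal binary linear code: it is a `ℤ/2ℤ`-submodule, it is
self-orthogonal, and all of its elements have Hamming weight divisible by `4`. -/
theorem stmt16 {n : ℕ} (C : Submodule (ZMod 4) (Fin n → ZMod 4))
    (hC : ∀ c ∈ C, ∀ c' ∈ C, ∑ i, c i * c' i = 0) :
    ∃ D : Submodule (ZMod 2) (Fin n → ZMod 2),
      (D : Set (Fin n → ZMod 2)) =
        (fun c : Fin n → ZMod 4 =>
          fun i => ZMod.castHom (by norm_num : (2 : ℕ) ∣ 4) (ZMod 2) (c i)) ''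
          (C : Set (Fin n → ZMod 4)) ∧
      (∀ x ∈ D, ∀ y ∈ D, ∑ i, x i * y i = 0) ∧
      (∀ x ∈ D, 4 ∣ Nat.card {i : Fin n // x i ≠ 0}) := by
  have key : ∀ a : ZMod 4, a * a =
      if ZMod.castHom (by norm_num : (2 : ℕ) ∣ 4) (ZMod 2) a ≠ 0 then 1 else 0 := by decide
  refine ⟨{ carrier := (fun c : Fin n → ZMod 4 =>
              fun i => ZMod.castHom (by norm_num : (2 : ℕ) ∣ 4) (ZMod 2) (c i)) ''
                (C : Set (Fin n → ZMod 4))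
            add_mem' := ?_, zero_mem' := ?_, smul_mem' := ?_ }, rfl, ?_, ?_⟩
  · rintro _ _ ⟨c, hc, rfl⟩ ⟨d, hd, rfl⟩
    refine ⟨c + d, C.add_mem hc hd, ?_⟩
    funext i
    exact map_add _ _ _
  · refine ⟨0, C.zero_mem, ?_⟩
    funext i
    exact map_zero _
  · rintro a _ ⟨c, hc, rfl⟩
    obtain ⟨b, rfl⟩ := ZMod.castHom_surjective (by norm_num : (2 : ℕ) ∣ 4) a
    refine ⟨b • c, C.smul_mem b hc, ?_⟩
    funext i
    exact map_mul _ _ _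
  · rintro _ ⟨c, hc, rfl⟩ _ ⟨d, hd, rfl⟩
    have h := congrArg (ZMod.castHom (by norm_num : (2 : ℕ) ∣ 4) (ZMod 2)) (hC c hc d hd)
    rw [map_sum, map_zero] at h
    rw [← h]
    exact Finset.sum_congr rfl fun i _ => (map_mul _ _ _).symm
  · rintro _ ⟨c, hc, rfl⟩
    have h := hC c hc c hc
    rw [Finset.sum_congr rfl fun i _ => key (c i), Finset.sum_boole] at h
    rw [Nat.card_eq_fintype_card, Fintype.card_subtype]
    exact (ZMod.natCast_eq_zero_iff _ _).1 h
end
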